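/- Let α > 1/4, let k ≥ 0 be an integer and N := 2^k, and let ψ₀ : ℝ → [0,1] be a smooth even function supported in [−2,2] with ψ₀ ≡ 1 on [−1,1]. Then there exists C_α > 0 (independent of k) such that for every a ∈ ℓ²(ℤ²) and every pair of measurable functions x, y : [−N^{−1}, N^{−1}] → 𝕋, one has ‖ χ_{[0,N^{−1}]}(|t|) Σ_{m∈ℤ∖{0}} Σ_{n∈ℤ} a(m,n) ψ₀(m/2^k) ψ₀(n/2^k) e^{i[m x(t) + n y(t) − t·sgn(m)(m²+n²)]} ‖_{L²_t(ℝ)} ≤ C_α N^α ‖a‖_{ℓ²(ℤ²)}. -/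

import Mathlib

/-!
Because of the cutoffs only the frequencies `|m|, |n| ≤ M = 2N` occur. For fixed `m ≠ 0` the sign
`σ = sgn m = ±1` is constant, so the phase splits as `(m x - σ t m²) + (n y - σ t n²)` and the
sharp jump of `sgn` does no harm. Cauchy-Schwarz in `m` (`strichartz_two_dim`) costs a factor
`(2M + 1)^{1/2} ≲ N^{1/2}` and leaves, for each `m`, a maximal estimate in one dimension:
`‖∑ₙ bₙ e^{i(n y(t) - σ t n²)}‖_{L²(J)} ≲ N^{-1/4} (1 + log N)^{1/2} ‖b‖` on intervals `J` of
length `1/(4N)`; the proof below is content with the first power of the logarithm.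

The one-dimensional estimate (`strichartz_one_dim`) is a `TT*` argument. By Schur's test
(`tt_star`) it suffices to bound `∫ |K(t,t')| dt'` for the kernel
`K(t,t') = ∑ₙ e^{i(n(y(t) - y(t')) - σ(t - t')n²)}`. Weyl differencing (`weyl_bound`) gives
`|K(t,t')|² ≲ (1 + log N) / |t - t'|`, uniformly in the values of `y`, so the integral is
`≲ N^{-1/2}` up to the logarithm (`integral_sqrt_sing`). The interval has to be this short for the
frequency `2(t - t')h`, `|h| ≤ 4N`, of the differenced sums to stay within `[-π, π]`; eight such
intervals cover `[-1/N, 1/N]` (`strichartz_unit_scale`). Altogether the squared norm is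
`≲ N · N^{-1/2} (1 + log N) ‖a‖²`, and `log N ≲ N^{2α - 1/2}` since `α > 1/4`.
-/

open Complex MeasureTheory Filter Topology Set
open scoped Real BigOperators ENNReal

noncomputable section

/-- A (distributional) function on the torus `𝕋² = ℝ²/(2πℤ)²` is represented by its
sequence of Fourier coefficients, indexed by `ℤ × ℤ`. -/
abbrev CoefSeq : Type := ℤ × ℤ → ℂ

/-- Squared `L²(𝕋²)` norm, via Parseval's identity. -/
def l2NormSq (a : CoefSeq) : ℝ := ∑' mn : ℤ × ℤ, ‖a mn‖ ^ 2

/-- The `L²(𝕋²)` norm. -/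
def l2Norm (a : CoefSeq) : ℝ := Real.sqrt (l2NormSq a)

/-- The Sobolev weight `(1 + m² + n²)^s`. -/
def sobWeight (s : ℝ) (mn : ℤ × ℤ) : ℝ :=
  (1 + (mn.1 : ℝ) ^ 2 + (mn.2 : ℝ) ^ 2) ^ s

/-- Squared `H^s(𝕋²)` norm: `Σ (1+m²+n²)^s |ĝ(m,n)|²`. -/
def hsNormSq (s : ℝ) (a : CoefSeq) : ℝ := ∑' mn : ℤ × ℤ, sobWeight s mn * ‖a mn‖ ^ 2

/-- The `H^s(𝕋²)` norm. -/
def hsNorm (s : ℝ) (a : CoefSeq) : ℝ := Real.sqrt (hsNormSq s a)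

/-- Membership in `H^s(𝕋²)`. -/
def InHs (s : ℝ) (a : CoefSeq) : Prop :=
  Summable (fun mn : ℤ × ℤ => sobWeight s mn * ‖a mn‖ ^ 2)

/-- Membership in `H^∞(𝕋²) = ∩_{s ≥ 0} H^s(𝕋²)`. -/
def InHinf (a : CoefSeq) : Prop := ∀ s : ℝ, 0 ≤ s → InHs s a

/-- The (2π-periodic) function on `ℝ²` represented by the coefficients `a`. -/
def toFun (a : CoefSeq) (x y : ℝ) : ℂ :=
  ∑' mn : ℤ × ℤ, a mn * Complex.exp (Complex.I * ((mn.1 : ℂ) * x + (mn.2 : ℂ) * y))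

/-- The `L^∞(𝕋²)` norm of the function represented by `a`. -/
def supNorm (a : CoefSeq) : ℝ := ⨆ p : ℝ × ℝ, ‖toFun a p.1 p.2‖

/-- Fourier multiplier of `∂ₓ`: `(∂ₓf)^(m,n) = i·m·f̂(m,n)`. -/
def dxOp (a : CoefSeq) : CoefSeq := fun mn => Complex.I * (mn.1 : ℂ) * a mn

/-- Fourier multiplier of `∂_y`: `(∂_yf)^(m,n) = i·n·f̂(m,n)`. -/
def dyOp (a : CoefSeq) : CoefSeq := fun mn => Complex.I * (mn.2 : ℂ) * a mn

/-- The `L^∞(𝕋²)` norm of the spatial gradient `∇f = (∂ₓf, ∂_yf)`. -/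
def gradSupNorm (a : CoefSeq) : ℝ :=
  ⨆ p : ℝ × ℝ, Real.sqrt (‖toFun (dxOp a) p.1 p.2‖ ^ 2 + ‖toFun (dyOp a) p.1 p.2‖ ^ 2)

/-- Fourier multiplier of `𝓗Δ`, where `(𝓗f)^(m,n) = -i·sgn(m)·f̂(m,n)` (zero for `m = 0`)
and `(Δf)^(m,n) = -(m²+n²)·f̂(m,n)`; hence `(𝓗Δf)^(m,n) = i·sgn(m)·(m²+n²)·f̂(m,n)`. -/
def hilbertLap (a : CoefSeq) : CoefSeq := fun mn =>
  Complex.I * (mn.1.sign : ℂ) * (((mn.1 : ℝ) ^ 2 + (mn.2 : ℝ) ^ 2 : ℝ) : ℂ) * a mn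

/-- Fourier coefficients of a product of two functions on the torus (convolution). -/
def convOp (a b : CoefSeq) : CoefSeq := fun mn => ∑' pq : ℤ × ℤ, a pq * b (mn - pq)

/-- The function represented by `a` is real-valued. -/
def RealCoef (a : CoefSeq) : Prop := ∀ mn : ℤ × ℤ, a (-mn) = starRingEnd ℂ (a mn)

/-- `∫₀^{2π} f(x,y) dx = 0` for a.e. `y ∈ 𝕋`. -/
def ZeroXMean (a : CoefSeq) : Prop := ∀ n : ℤ, a (0, n) = 0

/-- `u` solves `u_t + 𝓗Δu + u·uₓ = 0` on the time set `D`, coefficientwise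
(i.e. in the sense of distributions on the torus). -/
def IsSolutionOn (D : Set ℝ) (u : ℝ → CoefSeq) : Prop :=
  ∀ t ∈ D, ∀ mn : ℤ × ℤ,
    HasDerivWithinAt (fun τ => u τ mn)
      (-(hilbertLap (u t) mn) - convOp (u t) (dxOp (u t)) mn) D t

/-- Continuity of `u : D → H^s(𝕋²)`. -/
def ContHsOn (s : ℝ) (D : Set ℝ) (u : ℝ → CoefSeq) : Prop :=
  ∀ t₀ ∈ D, Tendsto (fun t => hsNorm s (fun mn => u t mn - u t₀ mn))
    (nhdsWithin t₀ D) (nhds 0)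

/-- `ψ : ℝ → [0,1]` is a smooth even cutoff, supported in `[-2,2]` and `≡ 1` on `[-1,1]`. -/
def IsCutoff (ψ : ℝ → ℝ) : Prop :=
  ContDiff ℝ (⊤ : ℕ∞) ψ ∧ (∀ x, ψ x ∈ Set.Icc (0:ℝ) 1) ∧ (∀ x, ψ (-x) = ψ x) ∧
  (∀ x, 2 < |x| → ψ x = 0) ∧ (∀ x ∈ Set.Icc (-1:ℝ) 1, ψ x = 1)

/-! ### Weyl sums with a quadratic phase -/

/-- Geometric sum over an integer interval: bounded by `π/|θ|`, whatever the interval. -/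
lemma norm_geom_sum_le (θ : ℝ) (h0 : θ ≠ 0) (hθ : |θ| ≤ π) (A B : ℤ) :
    ‖∑ l ∈ Finset.Ico A B, cexp (I * ((θ * l : ℝ) : ℂ))‖ ≤ π / |θ| := by
  have hpos : 0 < |θ| := abs_pos.mpr h0
  rcases lt_or_ge B A with hBA | hAB
  · rw [Finset.Ico_eq_empty (by simpa using hBA.le)]
    simp only [Finset.sum_empty, norm_zero]
    positivity
  have key : (cexp (I * (θ : ℂ)) - 1) * ∑ l ∈ Finset.Ico A B, cexp (I * ((θ * l : ℝ) : ℂ))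
      = cexp (I * ((θ * B : ℝ) : ℂ)) - cexp (I * ((θ * A : ℝ) : ℂ)) := by
    induction B, hAB using Int.leInduction with
    | base => simp
    | succ n hn ih =>
      have : Finset.Ico A (n + 1) = insert n (Finset.Ico A n) := by
        ext z; simp only [Finset.mem_Ico, Finset.mem_insert]; omega
      rw [this, Finset.sum_insert (by simp), mul_add, ih]
      have h1 : cexp (I * ((θ * ((n + 1 : ℤ) : ℝ) : ℝ) : ℂ))
          = cexp (I * (θ : ℂ)) * cexp (I * ((θ * n : ℝ) : ℂ)) := by
        rw [← Complex.exp_add]; congr 1; push_cast; ring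
      rw [h1]; ring
  have h2 : ‖cexp (I * (θ : ℂ)) - 1‖ * ‖∑ l ∈ Finset.Ico A B, cexp (I * ((θ * l : ℝ) : ℂ))‖ ≤ 2 := by
    rw [← norm_mul, key]
    refine (norm_sub_le _ _).trans ?_
    rw [mul_comm I, Complex.norm_exp_ofReal_mul_I, mul_comm I, Complex.norm_exp_ofReal_mul_I]
    norm_num
  have h3 : 2 * (|θ| / π) ≤ ‖cexp (I * (θ : ℂ)) - 1‖ := by
    rw [Complex.norm_exp_I_mul_ofReal_sub_one, norm_mul, Real.norm_eq_abs, Real.norm_eq_abs, abs_two]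
    have := Real.mul_abs_le_abs_sin (x := θ / 2) (by rw [abs_div, abs_two]; linarith)
    rw [abs_div, abs_two] at this
    have e : 2 / π * (|θ| / 2) = |θ| / π := by field_simp
    linarith
  have h4 := (mul_le_mul_of_nonneg_right h3 (norm_nonneg
    (∑ l ∈ Finset.Ico A B, cexp (I * ((θ * l : ℝ) : ℂ))))).trans h2
  rw [le_div_iff₀ hpos]
  have hpi := Real.pi_pos
  have e : 2 * (|θ| / π) * ‖∑ l ∈ Finset.Ico A B, cexp (I * ((θ * l : ℝ) : ℂ))‖
    = 2 * (‖∑ l ∈ Finset.Ico A B, cexp (I * ((θ * l : ℝ) : ℂ))‖ * |θ|) / π := by ring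
  rw [e, div_le_iff₀ hpi] at h4
  linarith

lemma sum_inv_abs_le (H : ℕ) :
    ∑ h ∈ (Finset.Icc (-(H : ℤ)) H).erase 0, (|(h : ℝ)|)⁻¹ ≤ 2 * (1 + Real.log H) := by
  have h1 : ∀ H : ℕ, ∑ h ∈ (Finset.Icc (-(H : ℤ)) H).erase 0, (|(h : ℝ)|)⁻¹
      = 2 * ((harmonic H : ℚ) : ℝ) := by
    intro H
    induction H with
    | zero => simp
    | succ n ih =>
      have : (Finset.Icc (-((n + 1 : ℕ) : ℤ)) ((n + 1 : ℕ) : ℤ)).erase 0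
          = insert (-((n : ℤ) + 1)) (insert ((n : ℤ) + 1) ((Finset.Icc (-(n : ℤ)) n).erase 0)) := by
        ext z
        simp only [Finset.mem_erase, Finset.mem_Icc, Finset.mem_insert]
        push_cast
        omega
      rw [this, Finset.sum_insert, Finset.sum_insert, ih, harmonic_succ]
      · push_cast
        rw [abs_neg, abs_of_nonneg (by positivity)]
        ring
      · simp
      · simp only [Finset.mem_erase, Finset.mem_Icc, Finset.mem_insert]
        omega
  rw [h1]
  have := harmonic_le_one_add_log H
  linarith

/-- The unimodular exponential `e^{i(nu - τn²)}`. -/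
def quadExp (u τ : ℝ) (n : ℤ) : ℂ := cexp (I * (((n : ℝ) * u - τ * (n : ℝ) ^ 2 : ℝ) : ℂ))

lemma norm_quadExp (u τ : ℝ) (n : ℤ) : ‖quadExp u τ n‖ = 1 := by
  rw [quadExp, mul_comm I, Complex.norm_exp_ofReal_mul_I]

lemma quadExp_mul_conj (u τ v σ : ℝ) (n : ℤ) :
    quadExp u τ n * starRingEnd ℂ (quadExp v σ n) = quadExp (u - v) (τ - σ) n := by
  rw [quadExp, quadExp, quadExp, ← Complex.exp_conj, ← Complex.exp_add]
  congr 1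
  simp only [map_mul, Complex.conj_I, Complex.conj_ofReal]
  push_cast; ring

lemma quadExp_shift (u τ : ℝ) (l h : ℤ) :
    quadExp u τ (l + h) * starRingEnd ℂ (quadExp u τ l)
      = quadExp u τ h * cexp (I * (((-(2 * τ * h)) * l : ℝ) : ℂ)) := by
  rw [quadExp, quadExp, quadExp, ← Complex.exp_conj, ← Complex.exp_add, ← Complex.exp_add]
  congr 1
  simp only [map_mul, Complex.conj_I, Complex.conj_ofReal]
  push_cast; ring

/-- Weyl differencing: `|S|²` is a double sum over `(n, l)`; for each fixed difference
`h = n - l` the quadratic phase becomes linear in `l`, so the inner sum is geometric. The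
condition `4M|τ| ≤ π` keeps the frequency `2τh` away from the nonzero multiples of `2π`. -/
lemma weyl_bound (M : ℕ) (u τ : ℝ) (h0 : τ ≠ 0) (hτ : 4 * M * |τ| ≤ π) :
    ‖∑ n ∈ Finset.Icc (-(M : ℤ)) M, quadExp u τ n‖ ^ 2
      ≤ (2 * M + 1) + π / |τ| * (1 + Real.log (2 * M)) := by
  set s := Finset.Icc (-(M : ℤ)) M with hs
  set T := Finset.Icc (-((2 * M : ℕ) : ℤ)) ((2 * M : ℕ) : ℤ) with hT
  have hτpos : 0 < |τ| := abs_pos.mpr h0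
  let inner : ℤ → ℂ := fun h => ∑ p ∈ s ×ˢ s with p.1 - p.2 = h,
      quadExp u τ p.1 * starRingEnd ℂ (quadExp u τ p.2)
  have e1 : ((‖∑ n ∈ s, quadExp u τ n‖ ^ 2 : ℝ) : ℂ) = ∑ h ∈ T, inner h := by
    push_cast
    rw [← Complex.mul_conj', map_sum, Finset.sum_mul_sum, ← Finset.sum_product']
    refine (Finset.sum_fiberwise_of_maps_to (g := fun p : ℤ × ℤ => p.1 - p.2) ?_ _).symm
    intro p hp
    simp only [hs, hT, Finset.mem_product, Finset.mem_Icc] at hp ⊢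
    push_cast
    omega
  have e2 : ∀ h, inner h = quadExp u τ h *
      ∑ l ∈ Finset.Ico (max (-(M : ℤ)) (-M - h)) (min (M : ℤ) (M - h) + 1),
        cexp (I * (((-(2 * τ * h)) * l : ℝ) : ℂ)) := by
    intro h
    rw [Finset.mul_sum]
    refine Finset.sum_nbij' (fun p => p.2) (fun l => (l + h, l)) ?_ ?_ ?_ ?_ ?_
    · intro p hp
      simp only [hs, Finset.mem_filter, Finset.mem_product, Finset.mem_Icc, Finset.mem_Ico] at hp ⊢
      omega
    · intro p hp
      simp only [hs, Finset.mem_filter, Finset.mem_product, Finset.mem_Icc, Finset.mem_Ico] at hp ⊢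
      omega
    · rintro ⟨p, q⟩ hp
      simp only [Finset.mem_filter] at hp
      ext <;> simp
      omega
    · intro l _; rfl
    · rintro ⟨p, q⟩ hp
      simp only [Finset.mem_filter] at hp
      have : p = q + h := by omega
      subst this
      exact quadExp_shift u τ q h
  have b0 : ‖inner 0‖ ≤ 2 * M + 1 := by
    rw [e2, norm_mul, norm_quadExp, one_mul]
    refine (norm_sum_le _ _).trans ?_
    have h2 : (((M : ℤ) + 1 + M).toNat : ℤ) = 2 * M + 1 := by omega
    have h3 : ((((M : ℤ) + 1 + M).toNat : ℕ) : ℝ) = 2 * M + 1 := by exact_mod_cast h2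
    simp [h3, mul_comm I, -ofReal_mul, -ofReal_neg]
  have bh : ∀ h ∈ T.erase 0, ‖inner h‖ ≤ π / (2 * |τ|) * (|(h : ℝ)|)⁻¹ := by
    intro h hh
    simp only [hT, Finset.mem_erase, Finset.mem_Icc] at hh
    have hne : (h : ℝ) ≠ 0 := by exact_mod_cast hh.1
    rw [e2, norm_mul, norm_quadExp, one_mul]
    have ha : |-(2 * τ * (h : ℝ))| = 2 * |τ| * |(h : ℝ)| := by
      rw [abs_neg, abs_mul, abs_mul, abs_two]
    have hh2 : |(h : ℝ)| ≤ 2 * M := by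
      have : |h| ≤ 2 * M := abs_le.mpr (by push_cast at hh; omega)
      exact_mod_cast this
    have := norm_geom_sum_le (-(2 * τ * h)) (neg_ne_zero.mpr (by positivity)) (by
      rw [ha]; nlinarith) (max (-(M : ℤ)) (-M - h)) (min (M : ℤ) (M - h) + 1)
    rw [ha] at this
    refine this.trans (le_of_eq ?_)
    have := abs_pos.mpr hne
    field_simp
  have h0T : (0 : ℤ) ∈ T := by simp [hT]
  calc ‖∑ n ∈ s, quadExp u τ n‖ ^ 2 = ‖((‖∑ n ∈ s, quadExp u τ n‖ ^ 2 : ℝ) : ℂ)‖ := by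
        rw [Complex.norm_real, Real.norm_of_nonneg (by positivity)]
    _ ≤ ∑ h ∈ T, ‖inner h‖ := by rw [e1]; exact norm_sum_le _ _
    _ = ‖inner 0‖ + ∑ h ∈ T.erase 0, ‖inner h‖ := (Finset.add_sum_erase _ _ h0T).symm
    _ ≤ (2 * M + 1) + ∑ h ∈ T.erase 0, π / (2 * |τ|) * (|(h : ℝ)|)⁻¹ :=
        add_le_add b0 (Finset.sum_le_sum bh)
    _ ≤ _ := by
        rw [← Finset.mul_sum]
        have := sum_inv_abs_le (2 * M)
        have h5 := mul_le_mul_of_nonneg_left this (show 0 ≤ π / (2 * |τ|) by positivity)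
        refine add_le_add le_rfl (h5.trans (le_of_eq ?_))
        push_cast
        field_simp

/-! ### Schur's test for `TT*` -/

/-- The `TT*` argument with Schur's test: an `L¹` bound, uniform in one variable, on the kernel
`K(t,t') = ∑ eₙ(t) conj(eₙ(t'))` bounds the square of the norm of `b ↦ ∑ bₙ eₙ` from `ℓ²` to
`L²(μ)`. -/
lemma tt_star {ι : Type*} (s : Finset ι) (μ : Measure ℝ) [IsFiniteMeasure μ] (e : ι → ℝ → ℂ)
    (hm : ∀ n, Measurable (e n)) (he : ∀ n t, ‖e n t‖ ≤ 1) (A : ℝ)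
    (hA0 : 0 ≤ A) (hA : ∀ᵐ t ∂μ, ∫ t', ‖∑ n ∈ s, e n t * starRingEnd ℂ (e n t')‖ ∂μ ≤ A) (b : ι → ℂ) :
    ∫ t, ‖∑ n ∈ s, b n * e n t‖ ^ 2 ∂μ ≤ A * ∑ n ∈ s, ‖b n‖ ^ 2 := by
  set F : ℝ → ℂ := fun t => ∑ n ∈ s, b n * e n t with hF
  have hFm : Measurable F := Finset.measurable_sum _ fun n _ => (hm n).const_mul _
  obtain ⟨R, hR⟩ : ∃ R, ∀ t, ‖F t‖ ≤ R := ⟨∑ n ∈ s, ‖b n‖, fun t =>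
    (norm_sum_le _ _).trans (Finset.sum_le_sum fun n _ => by
      rw [norm_mul]; exact mul_le_of_le_one_right (norm_nonneg _) (he n t))⟩
  have hcm : Measurable fun t => starRingEnd ℂ (F t) := Complex.continuous_conj.measurable.comp hFm
  have hR0 : 0 ≤ R := (norm_nonneg _).trans (hR 0)
  set K : ℝ × ℝ → ℂ := fun z => ∑ n ∈ s, e n z.1 * starRingEnd ℂ (e n z.2) with hK
  have hKm : Measurable K := Finset.measurable_sum _ fun n _ =>
    ((hm n).comp measurable_fst).mul
      (Complex.continuous_conj.measurable.comp ((hm n).comp measurable_snd))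
  have hKb : ∀ z, ‖K z‖ ≤ s.card := fun z => by
    refine (norm_sum_le _ _).trans ?_
    refine (Finset.sum_le_card_nsmul _ _ 1 fun n _ => ?_).trans (by simp)
    rw [norm_mul, RCLike.norm_conj]
    exact mul_le_one₀ (he _ _) (norm_nonneg _) (he _ _)
  have hKsymm : ∀ t t', ‖K (t', t)‖ = ‖K (t, t')‖ := fun t t' => by
    rw [← RCLike.norm_conj (K (t, t'))]
    simp only [hK, map_sum, map_mul, Complex.conj_conj]
    congr 1
    exact Finset.sum_congr rfl fun n _ => mul_comm _ _
  set c : ι → ℂ := fun n => ∫ t, e n t * starRingEnd ℂ (F t) ∂μ with hc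
  set X := ∫ t, ‖F t‖ ^ 2 ∂μ with hX
  have hX0 : 0 ≤ X := integral_nonneg fun t => by positivity
  have hFint : Integrable (fun t => ‖F t‖ ^ 2) μ :=
    Integrable.of_bound (by fun_prop) (R ^ 2) (ae_of_all _ fun t => by
      rw [Real.norm_of_nonneg (by positivity)]; gcongr; exact hR t)
  -- pairing `F` with itself expresses `X` through the coefficients `c`
  have s1 : (X : ℂ) = ∑ n ∈ s, b n * c n := by
    rw [hX, ← integral_complex_ofReal]
    simp only [hc, ← integral_const_mul]
    rw [← integral_finsetSum]
    · congr 1; ext t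
      push_cast
      rw [← Complex.mul_conj']
      nth_rewrite 1 [hF]
      rw [Finset.sum_mul]
      exact Finset.sum_congr rfl fun n _ => mul_assoc _ _ _
    · intro n _
      refine Integrable.const_mul ?_ _
      refine Integrable.of_bound ((hm n).mul hcm).aestronglyMeasurable R (ae_of_all _ fun t => ?_)
      rw [norm_mul, RCLike.norm_conj]
      exact (mul_le_mul (he n t) (hR t) (norm_nonneg _) zero_le_one).trans (by simp)
  have s2 : X ^ 2 ≤ (∑ n ∈ s, ‖b n‖ ^ 2) * ∑ n ∈ s, ‖c n‖ ^ 2 := by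
    have : X ≤ ∑ n ∈ s, ‖b n‖ * ‖c n‖ := by
      calc X = ‖(X : ℂ)‖ := by rw [Complex.norm_real, Real.norm_of_nonneg hX0]
        _ ≤ _ := by
          rw [s1]; refine (norm_sum_le _ _).trans (le_of_eq ?_)
          exact Finset.sum_congr rfl fun n _ => norm_mul _ _
    exact (pow_le_pow_left₀ hX0 this 2).trans (Finset.sum_mul_sq_le_sq_mul_sq _ _ _)
  have s3 : ((∑ n ∈ s, ‖c n‖ ^ 2 : ℝ) : ℂ)
      = ∫ z, K z * (starRingEnd ℂ (F z.1) * F z.2) ∂(μ.prod μ) := by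
    push_cast
    have : ∀ n, ((‖c n‖ : ℂ)) ^ 2 = ∫ z : ℝ × ℝ, (e n z.1 * starRingEnd ℂ (F z.1)) *
        starRingEnd ℂ (e n z.2 * starRingEnd ℂ (F z.2)) ∂(μ.prod μ) := by
      intro n
      rw [integral_prod_mul (fun t => e n t * starRingEnd ℂ (F t))
        (fun t => starRingEnd ℂ (e n t * starRingEnd ℂ (F t))), integral_conj,
        ← Complex.mul_conj']
    simp only [this]
    rw [← integral_finsetSum]
    · congr 1; ext z
      rw [hK, Finset.sum_mul]
      refine Finset.sum_congr rfl fun n _ => ?_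
      rw [map_mul, Complex.conj_conj]; ring
    · intro n _
      refine Integrable.of_bound ?_ (R * R) (ae_of_all _ fun z => ?_)
      · refine Measurable.aestronglyMeasurable ?_
        have h1 := (hm n).mul hcm
        exact (h1.comp measurable_fst).mul
          (Complex.continuous_conj.measurable.comp (h1.comp measurable_snd))
      · rw [norm_mul, RCLike.norm_conj, norm_mul, norm_mul, RCLike.norm_conj, RCLike.norm_conj]
        have h1 : ∀ t, ‖e n t‖ * ‖F t‖ ≤ R := fun t =>
          (mul_le_mul (he n t) (hR t) (norm_nonneg _) zero_le_one).trans (by simp)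
        exact mul_le_mul (h1 _) (h1 _) (by positivity) hR0
  have hi1 : Integrable (fun z : ℝ × ℝ => ‖K z‖ * ‖F z.1‖ ^ 2) (μ.prod μ) := by
    refine Integrable.of_bound ?_ (s.card * R ^ 2) (ae_of_all _ fun z => ?_)
    · exact (hKm.norm.mul ((hFm.comp measurable_fst).norm.pow_const 2)).aestronglyMeasurable
    · rw [Real.norm_of_nonneg (by positivity)]
      have := hKb z; have := hR z.1
      gcongr
  have hi2 : Integrable (fun z : ℝ × ℝ => ‖K z‖ * ‖F z.2‖ ^ 2) (μ.prod μ) := by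
    refine Integrable.of_bound ?_ (s.card * R ^ 2) (ae_of_all _ fun z => ?_)
    · exact (hKm.norm.mul ((hFm.comp measurable_snd).norm.pow_const 2)).aestronglyMeasurable
    · rw [Real.norm_of_nonneg (by positivity)]
      have := hKb z; have := hR z.2
      gcongr
  have j0 : ∫ t, (∫ t', ‖K (t, t')‖ * ‖F t‖ ^ 2 ∂μ) ∂μ ≤ A * X := by
    rw [hX, ← integral_const_mul]
    refine integral_mono_ae hi1.integral_prod_left (hFint.const_mul A) ?_
    filter_upwards [hA] with t ht
    rw [integral_mul_const]
    exact mul_le_mul_of_nonneg_right ht (by positivity)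
  have j1 : ∫ z, ‖K z‖ * ‖F z.1‖ ^ 2 ∂(μ.prod μ) ≤ A * X := by
    rw [integral_prod _ hi1]; exact j0
  have j2 : ∫ z, ‖K z‖ * ‖F z.2‖ ^ 2 ∂(μ.prod μ) ≤ A * X := by
    rw [integral_prod_symm _ hi2]
    simp only [hKsymm]
    exact j0
  have s4 : ∑ n ∈ s, ‖c n‖ ^ 2 ≤ A * X := by
    calc ∑ n ∈ s, ‖c n‖ ^ 2 = ‖((∑ n ∈ s, ‖c n‖ ^ 2 : ℝ) : ℂ)‖ := by
          rw [Complex.norm_real, Real.norm_of_nonneg (by positivity)]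
      _ ≤ ∫ z, ‖K z * (starRingEnd ℂ (F z.1) * F z.2)‖ ∂(μ.prod μ) := by
          rw [s3]; exact norm_integral_le_integral_norm _
      _ ≤ ∫ z, (1 / 2) * (‖K z‖ * ‖F z.1‖ ^ 2 + ‖K z‖ * ‖F z.2‖ ^ 2) ∂(μ.prod μ) := by
          refine integral_mono_of_nonneg (ae_of_all _ fun z => norm_nonneg _)
            ((hi1.add hi2).const_mul _) (ae_of_all _ fun z => ?_)
          simp only [norm_mul, RCLike.norm_conj]
          have := two_mul_le_add_sq ‖F z.1‖ ‖F z.2‖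
          nlinarith [norm_nonneg (K z)]
      _ ≤ A * X := by
          rw [integral_const_mul, integral_add hi1 hi2]; linarith
  have hB : 0 ≤ ∑ n ∈ s, ‖b n‖ ^ 2 := by positivity
  have s5 : X ^ 2 ≤ (∑ n ∈ s, ‖b n‖ ^ 2) * (A * X) :=
    s2.trans (mul_le_mul_of_nonneg_left s4 hB)
  rcases hX0.eq_or_lt with h | h
  · rw [← h]; positivity
  · have : X * X ≤ (A * ∑ n ∈ s, ‖b n‖ ^ 2) * X := by nlinarith
    exact le_of_mul_le_mul_right this h

/-! ### The one-dimensional maximal estimate -/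

/-- A kernel dominated by `D |t - s|^{-1/2}` has integral at most `4D√(q - p)` over any interval
`[p, q]` containing the singularity `t`. -/
lemma integral_sqrt_sing (p q t D : ℝ) (hpt : p ≤ t) (htq : t ≤ q) (hD : 0 ≤ D) (κ : ℝ → ℝ)
    (hκ : ∀ a b, IntervalIntegrable κ volume a b) (hb : ∀ s, κ s ^ 2 * |t - s| ≤ D ^ 2) :
    ∫ s in p..q, κ s ≤ 4 * D * √(q - p) := by
  have hpow : ∀ w : ℝ, ∫ s in (0:ℝ)..w, s ^ (-(1/2) : ℝ) = 2 * √w := by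
    intro w
    rw [integral_rpow (Or.inl (by norm_num)), Real.sqrt_eq_rpow]
    norm_num
    ring
  have hint : ∀ w : ℝ, IntervalIntegrable (fun s : ℝ => s ^ (-(1/2) : ℝ)) volume 0 w := fun w =>
    intervalIntegral.intervalIntegrable_rpow' (by norm_num)
  have hbd : ∀ s w : ℝ, 0 < w → |t - s| = w → κ s ≤ D * w ^ (-(1/2) : ℝ) := by
    intro s w hw hs
    have h1 := hb s
    rw [hs] at h1
    rw [Real.rpow_neg hw.le, ← Real.sqrt_eq_rpow, ← div_eq_mul_inv,
      le_div_iff₀ (Real.sqrt_pos.mpr hw)]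
    refine le_of_sq_le_sq ?_ hD
    rw [mul_pow, Real.sq_sqrt hw.le]
    exact h1
  have i1 : ∫ s in p..t, κ s ≤ D * (2 * √(t - p)) := by
    have hi : IntervalIntegrable (fun s => (t - s) ^ (-(1/2) : ℝ)) volume p t := by
      have := ((hint (t - p)).comp_sub_left t).symm
      simpa using this
    calc ∫ s in p..t, κ s ≤ ∫ s in p..t, D * (t - s) ^ (-(1/2) : ℝ) := by
          refine intervalIntegral.integral_mono_on_of_le_Ioo hpt (hκ _ _) (hi.const_mul D) ?_
          intro s hs
          exact hbd s _ (by linarith [hs.2]) (abs_of_pos (by linarith [hs.2]))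
      _ = _ := by
          rw [intervalIntegral.integral_const_mul,
            intervalIntegral.integral_comp_sub_left (fun s => s ^ (-(1/2) : ℝ)), sub_self, hpow]
  have i2 : ∫ s in t..q, κ s ≤ D * (2 * √(q - t)) := by
    have hi : IntervalIntegrable (fun s => (s - t) ^ (-(1/2) : ℝ)) volume t q := by
      have := ((hint (q - t)).comp_sub_right t)
      simpa using this
    calc ∫ s in t..q, κ s ≤ ∫ s in t..q, D * (s - t) ^ (-(1/2) : ℝ) := by
          refine intervalIntegral.integral_mono_on_of_le_Ioo htq (hκ _ _) (hi.const_mul D) ?_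
          intro s hs
          exact hbd s _ (by linarith [hs.1])
            (by rw [abs_sub_comm]; exact abs_of_pos (by linarith [hs.1]))
      _ = _ := by
          rw [intervalIntegral.integral_const_mul,
            intervalIntegral.integral_comp_sub_right (fun s => s ^ (-(1/2) : ℝ)), sub_self, hpow]
  rw [← intervalIntegral.integral_add_adjacent_intervals (hκ p t) (hκ t q)]
  have e1 : √(t - p) ≤ √(q - p) := Real.sqrt_le_sqrt (by linarith)
  have e2 : √(q - t) ≤ √(q - p) := Real.sqrt_le_sqrt (by linarith)
  nlinarith

lemma measurable_quadExp (y : ℝ → ℝ) (hy : Measurable y) (σ : ℝ) (n : ℤ) :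
    Measurable fun t => quadExp (y t) (σ * t) n := by
  unfold quadExp
  fun_prop

/-- One-dimensional maximal estimate for the Schrödinger group along an arbitrary measurable
curve `y`, on time intervals of length at most `1/(2M)` and for frequencies at most `M`. -/
lemma strichartz_one_dim (M : ℕ) (hM : 1 ≤ M) (y : ℝ → ℝ) (hy : Measurable y) (σ : ℝ)
    (hσ : |σ| = 1) (b : ℤ → ℂ) (p q : ℝ) (hpq : p ≤ q) (hlen : 2 * M * (q - p) ≤ 1) :
    ∫ t in p..q, ‖∑ n ∈ Finset.Icc (-(M : ℤ)) M, b n * quadExp (y t) (σ * t) n‖ ^ 2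
      ≤ (4 * (6 + 4 * Real.log (2 * M)) * √(q - p)) *
        ∑ n ∈ Finset.Icc (-(M : ℤ)) M, ‖b n‖ ^ 2 := by
  have hM' : (1 : ℝ) ≤ M := by exact_mod_cast hM
  have hlog : 0 ≤ Real.log (2 * M) := Real.log_nonneg (by linarith)
  set D := 6 + 4 * Real.log (2 * M) with hD
  rw [intervalIntegral.integral_of_le hpq]
  refine tt_star _ _ (fun n t => quadExp (y t) (σ * t) n) (measurable_quadExp y hy σ)
    (fun n t => (norm_quadExp _ _ _).le) _ (by positivity) ?_ b
  refine (ae_restrict_iff' measurableSet_Ioc).mpr (ae_of_all _ fun t ht => ?_)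
  have hKm : Measurable fun t' => ‖∑ n ∈ Finset.Icc (-(M : ℤ)) M,
      quadExp (y t) (σ * t) n * starRingEnd ℂ (quadExp (y t') (σ * t') n)‖ :=
    (Finset.measurable_sum _ fun n _ => (Complex.continuous_conj.measurable.comp
      (measurable_quadExp y hy σ n)).const_mul _).norm
  -- truncating the kernel to `[p, q]` makes the pointwise bound hold for every `t'`
  have hcongr : ∫ t' in Ioc p q, ‖∑ n ∈ Finset.Icc (-(M : ℤ)) M,
      quadExp (y t) (σ * t) n * starRingEnd ℂ (quadExp (y t') (σ * t') n)‖
      = ∫ t' in p..q, (Ioc p q).indicator (fun t' => ‖∑ n ∈ Finset.Icc (-(M : ℤ)) M,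
      quadExp (y t) (σ * t) n * starRingEnd ℂ (quadExp (y t') (σ * t') n)‖) t' := by
    rw [intervalIntegral.integral_of_le hpq]
    exact setIntegral_congr_fun measurableSet_Ioc fun s hs => by
      rw [indicator_of_mem hs]
  rw [hcongr]
  refine integral_sqrt_sing p q t D ht.1.le ht.2 (by positivity) _ ?_ ?_
  · intro a b
    refine ⟨?_, ?_⟩ <;>
    · refine Integrable.of_bound (hKm.indicator measurableSet_Ioc).aestronglyMeasurable
        ((Finset.Icc (-(M : ℤ)) M).card) (ae_of_all _ fun s => ?_)
      refine (norm_indicator_le_norm_self _ _).trans ?_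
      rw [norm_norm]
      refine (norm_sum_le _ _).trans ?_
      simp [norm_quadExp]
  · intro s
    by_cases hs : s ∈ Ioc p q
    swap
    · rw [indicator_of_notMem hs]; simp; positivity
    rw [indicator_of_mem hs]
    simp only [quadExp_mul_conj]
    rcases eq_or_ne t s with rfl | hne
    · simp; positivity
    have hτ : |σ * t - σ * s| = |t - s| := by rw [← mul_sub, abs_mul, hσ, one_mul]
    have hpos : 0 < |t - s| := abs_pos.mpr (sub_ne_zero.mpr hne)
    have hle : |t - s| ≤ q - p := by
      rw [abs_le]; constructor <;> linarith [ht.1, ht.2, hs.1, hs.2]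
    have hMt : 2 * M * |t - s| ≤ 1 :=
      (mul_le_mul_of_nonneg_left hle (by positivity)).trans hlen
    have hpi := Real.pi_gt_three
    have hpi4 := Real.pi_le_four
    have hw := weyl_bound M (y t - y s) (σ * t - σ * s)
      (by rw [← abs_pos, hτ]; exact hpos) (by rw [hτ]; linarith)
    rw [hτ] at hw
    calc _ ≤ ((2 * M + 1) + π / |t - s| * (1 + Real.log (2 * M))) * |t - s| :=
          mul_le_mul_of_nonneg_right hw hpos.le
      _ = (2 * M + 1) * |t - s| + π * (1 + Real.log (2 * M)) := by field_simp
      _ ≤ D := by rw [hD]; nlinarith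
      _ ≤ D ^ 2 := by nlinarith

/-! ### Two dimensions, on the time scale `1/N` -/

/-- Two-dimensional estimate: Cauchy-Schwarz in `m`, then the one-dimensional estimate in `n`
for each fixed `m`. -/
lemma strichartz_two_dim (M : ℕ) (hM : 1 ≤ M) (x y : ℝ → ℝ) (hy : Measurable y)
    (b : ℤ → ℤ → ℂ) (hb0 : ∀ n, b 0 n = 0) (p q : ℝ) (hpq : p ≤ q) (hlen : 2 * M * (q - p) ≤ 1) :
    ∫ t in p..q, ‖∑ m ∈ Finset.Icc (-(M : ℤ)) M, quadExp (x t) (m.sign * t) m *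
        ∑ n ∈ Finset.Icc (-(M : ℤ)) M, b m n * quadExp (y t) (m.sign * t) n‖ ^ 2
      ≤ (2 * M + 1) * ((4 * (6 + 4 * Real.log (2 * M)) * √(q - p)) *
        ∑ m ∈ Finset.Icc (-(M : ℤ)) M, ∑ n ∈ Finset.Icc (-(M : ℤ)) M, ‖b m n‖ ^ 2) := by
  set s := Finset.Icc (-(M : ℤ)) M with hs
  have hcard : ((s.card : ℕ) : ℝ) = 2 * M + 1 := by
    have : (s.card : ℤ) = 2 * M + 1 := by rw [hs]; simp; omega
    exact_mod_cast this
  have hGm : ∀ m : ℤ, Measurable fun t => ∑ n ∈ s, b m n * quadExp (y t) (m.sign * t) n :=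
    fun m => Finset.measurable_sum _ fun n _ => (measurable_quadExp y hy _ n).const_mul _
  have hGi : ∀ m : ℤ, IntervalIntegrable
      (fun t => ‖∑ n ∈ s, b m n * quadExp (y t) (m.sign * t) n‖ ^ 2) volume p q := by
    intro m
    refine ⟨?_, ?_⟩ <;>
    · refine Integrable.of_bound ((hGm m).norm.pow_const 2).aestronglyMeasurable
        ((∑ n ∈ s, ‖b m n‖) ^ 2) (ae_of_all _ fun t => ?_)
      rw [Real.norm_of_nonneg (by positivity)]
      gcongr
      refine (norm_sum_le _ _).trans (le_of_eq ?_)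
      simp [norm_quadExp]
  have hsum : IntervalIntegrable (fun t => ∑ m ∈ s,
      ‖∑ n ∈ s, b m n * quadExp (y t) (m.sign * t) n‖ ^ 2) volume p q :=
    ⟨integrable_finsetSum _ fun m _ => (hGi m).1, integrable_finsetSum _ fun m _ => (hGi m).2⟩
  calc _ ≤ ∫ t in p..q, (2 * M + 1) * ∑ m ∈ s,
        ‖∑ n ∈ s, b m n * quadExp (y t) (m.sign * t) n‖ ^ 2 := by
        rw [intervalIntegral.integral_of_le hpq, intervalIntegral.integral_of_le hpq]
        refine integral_mono_of_nonneg (ae_of_all _ fun t => by positivity)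
          (hsum.const_mul _).1 (ae_of_all _ fun t => ?_)
        rw [← hcard]
        refine le_trans ?_ sq_sum_le_card_mul_sum_sq
        refine pow_le_pow_left₀ (norm_nonneg _) ((norm_sum_le _ _).trans (le_of_eq ?_)) 2
        simp [norm_quadExp]
    _ = (2 * M + 1) * ∑ m ∈ s, ∫ t in p..q,
        ‖∑ n ∈ s, b m n * quadExp (y t) (m.sign * t) n‖ ^ 2 := by
        rw [intervalIntegral.integral_const_mul, intervalIntegral.integral_finsetSum]
        exact fun m _ => hGi m
    _ ≤ _ := by
        refine mul_le_mul_of_nonneg_left ?_ (by positivity)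
        rw [Finset.mul_sum]
        refine Finset.sum_le_sum fun m _ => ?_
        rcases eq_or_ne m 0 with rfl | hm
        · simp [hb0]
        · refine strichartz_one_dim M hM y hy _ ?_ (b m) p q hpq hlen
          rcases lt_or_gt_of_ne hm with h | h
          · simp [Int.sign_eq_neg_one_of_neg h]
          · simp [Int.sign_eq_one_of_pos h]

/-- Summation of the two-dimensional estimate over eight adjacent intervals of length `1/(4N)`,
which cover `[-1/N, 1/N]`. -/
lemma strichartz_unit_scale (k : ℕ) (x y : ℝ → ℝ) (hx : Measurable x) (hy : Measurable y)
    (b : ℤ → ℤ → ℂ) (hb0 : ∀ n, b 0 n = 0) :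
    ∫ t in (-((2:ℝ) ^ k)⁻¹)..((2:ℝ) ^ k)⁻¹,
        ‖∑ m ∈ Finset.Icc (-((2 * 2 ^ k : ℕ) : ℤ)) ((2 * 2 ^ k : ℕ) : ℤ),
          quadExp (x t) (m.sign * t) m *
          ∑ n ∈ Finset.Icc (-((2 * 2 ^ k : ℕ) : ℤ)) ((2 * 2 ^ k : ℕ) : ℤ),
            b m n * quadExp (y t) (m.sign * t) n‖ ^ 2
      ≤ 80 * (6 + 4 * Real.log (4 * 2 ^ k)) * √((2:ℝ) ^ k) *
        ∑ m ∈ Finset.Icc (-((2 * 2 ^ k : ℕ) : ℤ)) ((2 * 2 ^ k : ℕ) : ℤ),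
          ∑ n ∈ Finset.Icc (-((2 * 2 ^ k : ℕ) : ℤ)) ((2 * 2 ^ k : ℕ) : ℤ), ‖b m n‖ ^ 2 := by
  set M : ℕ := 2 * 2 ^ k with hM
  set N : ℝ := (2:ℝ) ^ k with hN
  have hN1 : 1 ≤ N := one_le_pow₀ (by norm_num)
  have hMN : (M : ℝ) = 2 * N := by rw [hM, hN]; push_cast; ring
  have hM1 : 1 ≤ M := by have := Nat.one_le_two_pow (n := k); omega
  set s := Finset.Icc (-(M : ℤ)) M with hs
  set f : ℝ → ℂ := fun t => ∑ m ∈ s, quadExp (x t) (m.sign * t) m *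
          ∑ n ∈ s, b m n * quadExp (y t) (m.sign * t) n with hf
  set B := ∑ m ∈ s, ∑ n ∈ s, ‖b m n‖ ^ 2 with hB
  have hB0 : 0 ≤ B := by positivity
  have hfm : Measurable f := Finset.measurable_sum _ fun m _ =>
    (measurable_quadExp x hx _ m).mul
      (Finset.measurable_sum _ fun n _ => (measurable_quadExp y hy _ n).const_mul _)
  have hfi : ∀ p q, IntervalIntegrable (fun t => ‖f t‖ ^ 2) volume p q := by
    intro p q
    refine ⟨?_, ?_⟩ <;>
    · refine Integrable.of_bound (hfm.norm.pow_const 2).aestronglyMeasurable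
        ((∑ m ∈ s, ∑ n ∈ s, ‖b m n‖) ^ 2) (ae_of_all _ fun t => ?_)
      rw [Real.norm_of_nonneg (by positivity)]
      gcongr
      refine (norm_sum_le _ _).trans (Finset.sum_le_sum fun m _ => ?_)
      rw [norm_mul, norm_quadExp, one_mul]
      refine (norm_sum_le _ _).trans (le_of_eq ?_)
      simp [norm_quadExp]
  let a : ℕ → ℝ := fun j => -N⁻¹ + j / (4 * N)
  have ha0 : a 0 = -N⁻¹ := by simp [a]
  have ha8 : a 8 = N⁻¹ := by simp only [a]; push_cast; field_simp; norm_num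
  have hstep : ∀ j, a (j + 1) - a j = 1 / (4 * N) := by
    intro j; simp only [a]; push_cast; ring
  have hsq : √(1 / (4 * N)) = √N / (2 * N) := by
    rw [Real.sqrt_eq_iff_eq_sq (by positivity) (by positivity), div_pow,
      Real.sq_sqrt (by positivity)]
    field_simp
    norm_num
  have hlog : 0 ≤ Real.log (4 * N) := Real.log_nonneg (by linarith)
  have hpiece : ∀ j, ∫ t in (a j)..(a (j + 1)), ‖f t‖ ^ 2
      ≤ 10 * (6 + 4 * Real.log (4 * N)) * √N * B := by
    intro j
    have hle : a j ≤ a (j + 1) := by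
      have := hstep j
      have : 0 < 1 / (4 * N) := by positivity
      linarith
    refine (strichartz_two_dim M hM1 x y hy b hb0 (a j) (a (j + 1)) hle ?_).trans ?_
    · rw [hstep, hMN]
      exact le_of_eq (by field_simp; norm_num)
    · rw [hstep, hsq, hMN, show 2 * (2 * N) = 4 * N by ring]
      have h5 : (4 * N + 1) / N ≤ 5 := by rw [div_le_iff₀ (by linarith)]; linarith
      have h6 : 0 ≤ 2 * (6 + 4 * Real.log (4 * N)) * √N * B := by positivity
      calc _ = (4 * N + 1) / N * (2 * (6 + 4 * Real.log (4 * N)) * √N * B) := by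
            field_simp; ring
        _ ≤ 5 * (2 * (6 + 4 * Real.log (4 * N)) * √N * B) :=
            mul_le_mul_of_nonneg_right h5 h6
        _ = _ := by ring
  rw [← ha0, ← ha8, ← intervalIntegral.sum_integral_adjacent_intervals
    (fun j _ => hfi (a j) (a (j + 1)))]
  refine (Finset.sum_le_sum fun j _ => hpiece j).trans (le_of_eq ?_)
  simp
  ring

/-! ### The localized estimate -/

/-- **Estimate (3.4) in the proof of Lemma 3.1.** For `α > 1/4` and `N = 2^k`, there is
`C_α > 0` (independent of `k`) such that for every `a ∈ ℓ²(ℤ²)` and all measurable curves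
`x, y : [-N⁻¹,N⁻¹] → 𝕋`,
`‖χ_{[0,N⁻¹]}(|t|) Σ_{m≠0,n} a(m,n) ψ₀(m/2^k) ψ₀(n/2^k) e^{i[mx(t)+ny(t)-t·sgn(m)(m²+n²)]}‖_{L²_t}
  ≤ C_α N^α ‖a‖_{ℓ²(ℤ²)}`. -/
theorem localized_strichartz_dual (α : ℝ) (hα : 1/4 < α) (ψ : ℝ → ℝ) (hψ : IsCutoff ψ) :
    ∃ C > (0:ℝ), ∀ k : ℕ,
      ∀ a : CoefSeq, Summable (fun mn : ℤ × ℤ => ‖a mn‖ ^ 2) →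
        ∀ x y : ℝ → ℝ, Measurable x → Measurable y →
          Real.sqrt (∫ t : ℝ,
              ‖Set.indicator {t : ℝ | |t| ≤ (((2:ℝ) ^ k))⁻¹}
                (fun t => ∑' mn : ℤ × ℤ,
                  if mn.1 = 0 then 0 else
                    a mn * (ψ ((mn.1 : ℝ) / 2 ^ k) : ℂ) * (ψ ((mn.2 : ℝ) / 2 ^ k) : ℂ) *
                      Complex.exp (Complex.I *
                        (((mn.1 : ℝ) * x t + (mn.2 : ℝ) * y t -
                          t * (mn.1.sign : ℝ) * ((mn.1 : ℝ) ^ 2 + (mn.2 : ℝ) ^ 2) : ℝ) : ℂ)))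
                t‖ ^ 2) ≤
            C * ((2:ℝ) ^ k) ^ α * l2Norm a := by
  -- `N ^ β` absorbs the logarithm; `α > 1/4` makes `β` positive
  set β : ℝ := 2 * α - 1 / 2 with hβ
  have hβ0 : 0 < β := by rw [hβ]; linarith
  set C₀ : ℝ := 6 + 4 * (4 ^ β / β) with hC₀
  have hC₀pos : 0 < C₀ := by positivity
  refine ⟨√(80 * C₀), Real.sqrt_pos.mpr (by positivity), ?_⟩
  intro k a ha x y hx hy
  set N : ℝ := (2:ℝ) ^ k with hN
  have hN1 : 1 ≤ N := one_le_pow₀ (by norm_num)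
  have hNpos : 0 < N := by linarith
  set M : ℕ := 2 * 2 ^ k with hM
  have hMN : (M : ℝ) = 2 * N := by rw [hM, hN]; push_cast; ring
  set s := Finset.Icc (-(M : ℤ)) M with hs
  -- of the cutoff, only `0 ≤ ψ ≤ 1` and the support condition matter
  obtain ⟨-, hψ01, -, hψsupp, -⟩ := hψ
  have hψs : ∀ m : ℤ, m ∉ s → ψ ((m : ℝ) / N) = 0 := by
    intro m hm
    apply hψsupp
    rw [abs_div, abs_of_pos hNpos, lt_div_iff₀ hNpos, ← hMN]
    have : (M : ℤ) < |m| := by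
      by_contra hcon
      exact hm (Finset.mem_Icc.mpr (abs_le.mp (not_lt.mp hcon)))
    exact_mod_cast this
  have hψ1 : ∀ z, ‖(ψ z : ℂ)‖ ≤ 1 := fun z => by
    rw [Complex.norm_real, Real.norm_of_nonneg (hψ01 z).1]; exact (hψ01 z).2
  let b : ℤ → ℤ → ℂ := fun m n =>
    if m = 0 then 0 else a (m, n) * (ψ ((m : ℝ) / N) : ℂ) * (ψ ((n : ℝ) / N) : ℂ)
  have hb0 : ∀ n, b 0 n = 0 := fun n => if_pos rfl
  have hba : ∀ m n, ‖b m n‖ ≤ ‖a (m, n)‖ := by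
    intro m n
    simp only [b]
    split_ifs
    · simp
    · rw [norm_mul, norm_mul, mul_assoc]
      exact mul_le_of_le_one_right (norm_nonneg _)
        (mul_le_one₀ (hψ1 _) (norm_nonneg _) (hψ1 _))
  have hpt : ∀ t : ℝ, (∑' mn : ℤ × ℤ,
                  if mn.1 = 0 then 0 else
                    a mn * (ψ ((mn.1 : ℝ) / N) : ℂ) * (ψ ((mn.2 : ℝ) / N) : ℂ) *
                      Complex.exp (Complex.I *
                        (((mn.1 : ℝ) * x t + (mn.2 : ℝ) * y t -
                          t * (mn.1.sign : ℝ) * ((mn.1 : ℝ) ^ 2 + (mn.2 : ℝ) ^ 2) : ℝ) : ℂ)))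
      = ∑ m ∈ s, quadExp (x t) (m.sign * t) m *
          ∑ n ∈ s, b m n * quadExp (y t) (m.sign * t) n := by
    intro t
    rw [tsum_eq_sum (s := s ×ˢ s)]
    · rw [Finset.sum_product]
      refine Finset.sum_congr rfl fun m _ => ?_
      rw [Finset.mul_sum]
      refine Finset.sum_congr rfl fun n _ => ?_
      simp only [b]
      split_ifs with h
      · simp
      · have : cexp (I * (((m : ℝ) * x t + (n : ℝ) * y t -
            t * (m.sign : ℝ) * ((m : ℝ) ^ 2 + (n : ℝ) ^ 2) : ℝ) : ℂ))
            = quadExp (x t) (m.sign * t) m * quadExp (y t) (m.sign * t) n := by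
          rw [quadExp, quadExp, ← Complex.exp_add]
          congr 1
          push_cast; ring
        rw [this]; ring
    · rintro ⟨m, n⟩ hmn
      rw [Finset.mem_product, not_and_or] at hmn
      rcases hmn with h | h
      · simp [hψs m h]
      · simp [hψs n h]
  simp only [hpt]
  have hset : {t : ℝ | |t| ≤ N⁻¹} = Icc (-N⁻¹) N⁻¹ := by
    ext t; simp [abs_le]
  simp only [hset, norm_indicator_eq_indicator_norm]
  have hind : ∀ g : ℝ → ℝ, (fun t => (Icc (-N⁻¹) N⁻¹).indicator g t ^ 2)
      = (Icc (-N⁻¹) N⁻¹).indicator fun t => g t ^ 2 := by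
    intro g; ext t
    by_cases h : t ∈ Icc (-N⁻¹) N⁻¹
    · rw [indicator_of_mem h, indicator_of_mem h]
    · rw [indicator_of_notMem h, indicator_of_notMem h]; simp
  rw [hind, integral_indicator measurableSet_Icc, integral_Icc_eq_integral_Ioc,
    ← intervalIntegral.integral_of_le (by have : 0 < N⁻¹ := by positivity
                                          linarith)]
  have hmain := strichartz_unit_scale k x y hx hy b hb0
  have hsum : ∑ m ∈ s, ∑ n ∈ s, ‖b m n‖ ^ 2 ≤ l2NormSq a := by
    rw [← Finset.sum_product' s s fun m n => ‖b m n‖ ^ 2]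
    refine le_trans (Finset.sum_le_sum fun p _ => ?_)
      (ha.sum_le_tsum (s ×ˢ s) fun _ _ => by positivity)
    exact pow_le_pow_left₀ (norm_nonneg _) (hba p.1 p.2) 2
  have hlog : 6 + 4 * Real.log (4 * N) ≤ C₀ * N ^ β := by
    have h1 := Real.log_le_rpow_div (x := 4 * N) (by positivity) hβ0
    rw [Real.mul_rpow (by norm_num) hNpos.le] at h1
    have h2 : 1 ≤ N ^ β := Real.one_le_rpow hN1 hβ0.le
    have h3 : (4:ℝ) ^ β * N ^ β / β = 4 ^ β / β * N ^ β := by ring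
    rw [h3] at h1
    rw [hC₀]
    nlinarith
  have hl0 : 0 ≤ l2NormSq a := tsum_nonneg fun _ => by positivity
  refine Real.sqrt_le_iff.mpr ⟨by unfold l2Norm; positivity, hmain.trans ?_⟩
  have hpow : N ^ β * √N = (N ^ α) ^ 2 := by
    rw [Real.sqrt_eq_rpow, ← Real.rpow_add hNpos, ← Real.rpow_natCast, ← Real.rpow_mul hNpos.le]
    congr 1
    rw [hβ]; push_cast; ring
  rw [l2Norm, mul_pow, mul_pow, Real.sq_sqrt (by positivity), Real.sq_sqrt hl0, ← hpow]
  calc _ ≤ 80 * (C₀ * N ^ β) * √N * l2NormSq a := by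
        have : (0:ℝ) ≤ ∑ m ∈ s, ∑ n ∈ s, ‖b m n‖ ^ 2 := by positivity
        gcongr
    _ = _ := by ring
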